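/- Let p be a prime and let A = ![![1,2],![0,1]], B = ![![1,0],![2,1]], C = ![![2,1],![1,1]]. Suppose n is such that Nat.fib (2n+1) < p. Then for any two distinct lists l₁ ≠ l₂ over Fin 3, each of length at most n, the products of the corresponding matrices (0 ↦ A, 1 ↦ B, 2 ↦ C), reduced entrywise modulo p (i.e., mapped to matrices over ZMod p), are distinct. -/

import Mathlib

open Matrix

def A : Matrix (Fin 2) (Fin 2) ℤ := !![1, 2; 0, 1]
def B : Matrix (Fin 2) (Fin 2) ℤ := !![1, 0; 2, 1]
def C : Matrix (Fin 2) (Fin 2) ℤ := !![2, 1; 1, 1]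

/-- The product of the matrices of a word. -/
def wordProd (l : List (Fin 3)) : Matrix (Fin 2) (Fin 2) ℤ := (l.map (![A, B, C])).prod

lemma wordProd_nil : wordProd [] = 1 := by simp [wordProd]

lemma wordProd_cons (x : Fin 3) (l : List (Fin 3)) :
    wordProd (x :: l) = (![A, B, C] x) * wordProd l := by simp [wordProd]

lemma wordProd_A (l : List (Fin 3)) (j : Fin 2) :
    wordProd (0 :: l) 0 j = wordProd l 0 j + 2 * wordProd l 1 j ∧
    wordProd (0 :: l) 1 j = wordProd l 1 j := by
  simp [wordProd_cons, A, Matrix.mul_apply, Fin.sum_univ_two]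

lemma wordProd_B (l : List (Fin 3)) (j : Fin 2) :
    wordProd (1 :: l) 0 j = wordProd l 0 j ∧
    wordProd (1 :: l) 1 j = 2 * wordProd l 0 j + wordProd l 1 j := by
  simp [wordProd_cons, B, Matrix.mul_apply, Fin.sum_univ_two]

lemma wordProd_C (l : List (Fin 3)) (j : Fin 2) :
    wordProd (2 :: l) 0 j = 2 * wordProd l 0 j + wordProd l 1 j ∧
    wordProd (2 :: l) 1 j = wordProd l 0 j + wordProd l 1 j := by
  simp [wordProd_cons, C, Matrix.mul_apply, Fin.sum_univ_two]

lemma wordProd_bound (l : List (Fin 3)) (j : Fin 2) :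
    0 ≤ wordProd l 0 j ∧ 0 ≤ wordProd l 1 j ∧
    wordProd l 0 j ≤ Nat.fib (2 * l.length + 1) ∧
    wordProd l 1 j ≤ Nat.fib (2 * l.length + 1) ∧
    wordProd l 0 j + wordProd l 1 j ≤ Nat.fib (2 * l.length + 2) := by
  induction l with
  | nil => fin_cases j <;> simp [wordProd_nil]
  | cons x l ih =>
    obtain ⟨h0, h1, h2, h3, h4⟩ := ih
    have e3 : Nat.fib (2 * (x :: l).length + 1) =
        Nat.fib (2 * l.length + 1) + Nat.fib (2 * l.length + 2) := by
      rw [← Nat.fib_add_two]; congr 1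
    have e4 : Nat.fib (2 * (x :: l).length + 2) =
        Nat.fib (2 * l.length + 2) + Nat.fib (2 * (x :: l).length + 1) := by
      rw [Nat.fib_add_two]; congr 1
    rw [e4, e3]
    push_cast
    have hle : Nat.fib (2 * l.length + 1) ≤ Nat.fib (2 * l.length + 2) :=
      Nat.fib_mono (by omega)
    fin_cases x
    · obtain ⟨a, b⟩ := wordProd_A l j
      simp only [Fin.zero_eta, Fin.mk_one, Fin.reduceFinMk, a, b]
      refine ⟨?_, ?_, ?_, ?_, ?_⟩ <;> omega
    · obtain ⟨a, b⟩ := wordProd_B l j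
      simp only [Fin.zero_eta, Fin.mk_one, Fin.reduceFinMk, a, b]
      refine ⟨?_, ?_, ?_, ?_, ?_⟩ <;> omega
    · obtain ⟨a, b⟩ := wordProd_C l j
      simp only [Fin.zero_eta, Fin.mk_one, Fin.reduceFinMk, a, b]
      refine ⟨?_, ?_, ?_, ?_, ?_⟩ <;> omega

lemma wordProd_det (l : List (Fin 3)) : (wordProd l).det = 1 := by
  induction l with
  | nil => simp [wordProd_nil]
  | cons x l ih =>
    rw [wordProd_cons, Matrix.det_mul, ih]
    fin_cases x <;> simp [A, B, C, Matrix.det_fin_two]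

/-- The linear relation between the rows of a product that begins with a given letter. -/
def Lead (x : Fin 3) (a b : ℤ) : Prop :=
  if x = 0 then 2 * b ≤ a else if x = 1 then 2 * a ≤ b else b ≤ a ∧ a ≤ 2 * b

lemma wordProd_lead (x : Fin 3) (l : List (Fin 3)) (j : Fin 2) :
    Lead x (wordProd (x :: l) 0 j) (wordProd (x :: l) 1 j) := by
  obtain ⟨h0, h1, -⟩ := wordProd_bound l j
  fin_cases x
  · obtain ⟨a, b⟩ := wordProd_A l j
    simp [Lead, a, b]; omega
  · obtain ⟨a, b⟩ := wordProd_B l j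
    simp [Lead, a, b]; omega
  · obtain ⟨a, b⟩ := wordProd_C l j
    simp [Lead, a, b]; omega

lemma lead_unique (x y : Fin 3) (a b c d : ℤ) (ha : 0 ≤ a) (hb : 0 ≤ b) (hc : 0 ≤ c)
    (hd : 0 ≤ d) (hdet : a * d - b * c = 1)
    (h1 : Lead x a c) (h2 : Lead x b d) (h3 : Lead y a c) (h4 : Lead y b d) : x = y := by
  by_contra hne
  have key : (a = 2 * c ∧ b = 2 * d) ∨ (a = 0 ∧ b = 0) ∨ (c = 0 ∧ d = 0) := by
    fin_cases x <;> fin_cases y <;> simp [Lead] at * <;> omega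
  rcases key with ⟨rfl, rfl⟩ | ⟨rfl, rfl⟩ | ⟨rfl, rfl⟩
  · have : 2 * c * d - 2 * d * c = 0 := by ring
    omega
  · simp at hdet
  · simp at hdet

lemma wordProd_cons_ne_nil (x : Fin 3) (l : List (Fin 3)) : wordProd (x :: l) ≠ wordProd [] := by
  intro h
  have h0 := wordProd_lead x l 0
  have h1 := wordProd_lead x l 1
  rw [h, wordProd_nil] at h0 h1
  fin_cases x <;> simp [Lead] at h0 h1

lemma letter_cancel (x : Fin 3) (M N : Matrix (Fin 2) (Fin 2) ℤ)
    (h : (![A, B, C] x) * M = (![A, B, C] x) * N) : M = N := by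
  have hd : IsUnit (![A, B, C] x) := by
    rw [Matrix.isUnit_iff_isUnit_det]
    fin_cases x <;> simp [A, B, C, Matrix.det_fin_two]
  exact hd.mul_left_cancel h

lemma wordProd_injective : ∀ l₁ l₂ : List (Fin 3), wordProd l₁ = wordProd l₂ → l₁ = l₂
  | [], [], _ => rfl
  | [], x :: l, h => absurd h.symm (wordProd_cons_ne_nil x l)
  | x :: l, [], h => absurd h (wordProd_cons_ne_nil x l)
  | x :: l, y :: m, h => by
    have hdet := wordProd_det (x :: l)
    rw [Matrix.det_fin_two] at hdet
    obtain ⟨p0, p1, -⟩ := wordProd_bound (x :: l) 0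
    obtain ⟨q0, q1, -⟩ := wordProd_bound (x :: l) 1
    have h3 := wordProd_lead y m 0
    have h4 := wordProd_lead y m 1
    rw [← h] at h3 h4
    have hxy : x = y := lead_unique x y _ _ _ _ p0 q0 p1 q1 hdet
      (wordProd_lead x l 0) (wordProd_lead x l 1) h3 h4
    subst hxy
    rw [wordProd_cons, wordProd_cons] at h
    rw [wordProd_injective l m (letter_cancel x _ _ h)]

lemma wordProd_range (n : ℕ) (l : List (Fin 3)) (hl : l.length ≤ n) (i j : Fin 2) :
    0 ≤ wordProd l i j ∧ wordProd l i j ≤ Nat.fib (2 * n + 1) := by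
  obtain ⟨h0, h1, h2, h3, -⟩ := wordProd_bound l j
  have hle : Nat.fib (2 * l.length + 1) ≤ Nat.fib (2 * n + 1) := Nat.fib_mono (by omega)
  fin_cases i <;> simp only [Fin.zero_eta, Fin.mk_one] <;> omega

/-- No short collisions modulo `p`: if `Nat.fib (2n+1) < p` then distinct words
of length at most `n` in `A`, `B`, `C` hash to distinct matrices over `ZMod p`. -/
theorem no_short_collisions (p : ℕ) (hp : p.Prime) (n : ℕ)
    (hfib : Nat.fib (2 * n + 1) < p)
    (l₁ l₂ : List (Fin 3)) (h₁ : l₁.length ≤ n) (h₂ : l₂.length ≤ n)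
    (hne : l₁ ≠ l₂) :
    ((l₁.map (![A, B, C])).prod).map (Int.cast : ℤ → ZMod p) ≠
      ((l₂.map (![A, B, C])).prod).map (Int.cast : ℤ → ZMod p) := by
  intro h
  apply hne
  apply wordProd_injective
  ext i j
  have hij := congrFun (congrFun h i) j
  change ((wordProd l₁ i j : ℤ) : ZMod p) = ((wordProd l₂ i j : ℤ) : ZMod p) at hij
  rw [ZMod.intCast_eq_intCast_iff] at hij
  obtain ⟨a0, a1⟩ := wordProd_range n l₁ h₁ i j
  obtain ⟨b0, b1⟩ := wordProd_range n l₂ h₂ i j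
  have := hij.eq
  rwa [Int.emod_eq_of_lt a0 (by omega), Int.emod_eq_of_lt b0 (by omega)] at this
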